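/- arXiv:2507.10821 — 4 statements merged into one kernel-verified Lean document; each statement's English description precedes it below -/
import Mathlib

section
/- Let L > 0 and N ≥ 1. Let φ, φ̃ : [−L,L] → ℂ be twice continuously differentiable, and for each j = 1,…,N let ψⱼ, ψ̃ⱼ : [L,∞) → ℂ be twice continuously differentiable with ψⱼ(x), ψⱼ'(x), ψ̃ⱼ(x), ψ̃ⱼ'(x) → 0 as x → ∞ and with ψⱼ''·conj(ψ̃ⱼ) and ψⱼ·conj(ψ̃ⱼ'') integrable on (L,∞). Then ∫_{−L}^{L} [(−φ'')·conj(φ̃) − φ·conj(−φ̃'')] dx + Σ_{j=1}^{N} ∫_{L}^{∞} [(−ψⱼ'')·conj(ψ̃ⱼ) − ψⱼ·conj(−ψ̃ⱼ'')] dx = ⟨P₊ u, ũ⟩ − ⟨P₋ v, ṽ⟩, where u = (φ(−L), φ'(−L), ψ₁(L), ψ₁'(L), …, ψ_N(L), ψ_N'(L)) ∈ ℂ^(2(N+1)), ũ is defined analogously from φ̃, ψ̃ⱼ, v = (φ(L), φ'(L), φ(L), φ'(L), …, φ(L), φ'(L)) consists of N+1 copies of (φ(L), φ'(L)), and ṽ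 is defined analogously from φ̃. -/
/-!
Both integrands are the derivative of the Wronskian `W(f, g) = f · conj g' - f' · conj g`, so each
edge contributes boundary values only: `W(L) - W(-L)` from the loop and `-W(L)` from each half-line,
where decay of the functions and their first derivatives kills the value at infinity. On the other
side, `⟨P₊ x, y⟩` is the sum over the `N + 1` blocks of `x₁ conj y₀ - x₀ conj y₁`, that is, minus the
sum of the Wronskians; the `N + 1` identical blocks of `v` are averaged to one by the factor
`1 / (N + 1)` in `P₋`.
-/

open scoped BigOperators
open MeasureTheory Set Filter

/-- The standard Hermitian inner product on `ι → ℂ`, linear in the first argument and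
conjugate-linear in the second. -/
noncomputable def herm {ι : Type*} [Fintype ι] (x y : ι → ℂ) : ℂ :=
  ∑ i, x i * (starRingEnd ℂ) (y i)

/-- The block-diagonal matrix `P₊` consisting of `n = N+1` copies of
`P₀ = [[0,1],[-1,0]]` on the diagonal; indices modelled as `Fin (N+1) × Fin 2`. -/
noncomputable def Pplus (N : ℕ) : Matrix (Fin (N + 1) × Fin 2) (Fin (N + 1) × Fin 2) ℂ :=
  fun p q =>
    if p.1 = q.1 then
      (if p.2 = 0 ∧ q.2 = 1 then 1 else if p.2 = 1 ∧ q.2 = 0 then -1 else 0)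
    else 0

/-- `P₋ = (1/(N+1)) • P₊`. -/
noncomputable def Pminus (N : ℕ) : Matrix (Fin (N + 1) × Fin 2) (Fin (N + 1) × Fin 2) ℂ :=
  (((N : ℂ) + 1)⁻¹) • Pplus N

/-- The boundary vector `u = (φ(−L), φ'(−L), ψ₁(L), ψ₁'(L), …, ψ_N(L), ψ_N'(L))`. -/
noncomputable def bdryU {N : ℕ} (L : ℝ) (φ φd : ℝ → ℂ) (ψ ψd : Fin N → ℝ → ℂ) :
    Fin (N + 1) × Fin 2 → ℂ := fun p =>
  Fin.cases (motive := fun _ => Fin 2 → ℂ)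
    (fun a => if a = 0 then φ (-L) else φd (-L))
    (fun k a => if a = 0 then ψ k L else ψd k L) p.1 p.2

/-- The boundary vector `v` consisting of `N+1` copies of `(φ(L), φ'(L))`. -/
noncomputable def bdryV {N : ℕ} (L : ℝ) (φ φd : ℝ → ℂ) :
    Fin (N + 1) × Fin 2 → ℂ := fun p => if p.2 = 0 then φ L else φd L

/-- The Wronskian `f · conj g' - f' · conj g` has derivative `-f'' · conj g - f · conj (-g'')`: the
terms with only first derivatives cancel. -/
lemma wronskian_hasDerivWithinAt {f fd g gd : ℝ → ℂ} {fdd gdd : ℂ} {s : Set ℝ} {x : ℝ}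
    (hf : HasDerivWithinAt f (fd x) s x) (hfd : HasDerivWithinAt fd fdd s x)
    (hg : HasDerivWithinAt g (gd x) s x) (hgd : HasDerivWithinAt gd gdd s x) :
    HasDerivWithinAt
      (fun y => f y * (starRingEnd ℂ) (gd y) - fd y * (starRingEnd ℂ) (g y))
      ((-fdd) * (starRingEnd ℂ) (g x) - f x * (starRingEnd ℂ) (-gdd)) s x := by
  have h := (hf.mul hgd.star).sub (hfd.mul hg.star)
  refine h.congr_deriv ?_
  simp only [starRingEnd_apply, star_neg]
  ring

lemma integral_loop {a b : ℝ} (hab : a ≤ b) {f fd fdd g gd gdd : ℝ → ℂ}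
    (hf : ∀ x ∈ Icc a b, HasDerivWithinAt f (fd x) (Icc a b) x)
    (hfd : ∀ x ∈ Icc a b, HasDerivWithinAt fd (fdd x) (Icc a b) x)
    (hfdd : ContinuousOn fdd (Icc a b))
    (hg : ∀ x ∈ Icc a b, HasDerivWithinAt g (gd x) (Icc a b) x)
    (hgd : ∀ x ∈ Icc a b, HasDerivWithinAt gd (gdd x) (Icc a b) x)
    (hgdd : ContinuousOn gdd (Icc a b)) :
    (∫ x in a..b, ((-fdd x) * (starRingEnd ℂ) (g x) - f x * (starRingEnd ℂ) (-(gdd x))))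
      = (f b * (starRingEnd ℂ) (gd b) - fd b * (starRingEnd ℂ) (g b))
        - (f a * (starRingEnd ℂ) (gd a) - fd a * (starRingEnd ℂ) (g a)) := by
  have hW := fun x hx => wronskian_hasDerivWithinAt (hf x hx) (hfd x hx) (hg x hx) (hgd x hx)
  refine intervalIntegral.integral_eq_sub_of_hasDerivAt_of_le hab
    (fun x hx => (hW x hx).continuousWithinAt)
    (fun x hx => (hW x (Ioo_subset_Icc_self hx)).hasDerivAt (Icc_mem_nhds hx.1 hx.2)) ?_
  apply ContinuousOn.intervalIntegrable_of_Icc hab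
  have hgc : ContinuousOn g (Icc a b) := fun x hx => (hg x hx).continuousWithinAt
  have hfc : ContinuousOn f (Icc a b) := fun x hx => (hf x hx).continuousWithinAt
  exact (hfdd.neg.mul hgc.star).sub (hfc.mul hgdd.neg.star)

lemma integral_halfLine {a : ℝ} {f fd fdd g gd gdd : ℝ → ℂ}
    (hf : ∀ x ∈ Ici a, HasDerivWithinAt f (fd x) (Ici a) x)
    (hfd : ∀ x ∈ Ici a, HasDerivWithinAt fd (fdd x) (Ici a) x)
    (hg : ∀ x ∈ Ici a, HasDerivWithinAt g (gd x) (Ici a) x)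
    (hgd : ∀ x ∈ Ici a, HasDerivWithinAt gd (gdd x) (Ici a) x)
    (hf0 : Tendsto f atTop (nhds 0)) (hfd0 : Tendsto fd atTop (nhds 0))
    (hg0 : Tendsto g atTop (nhds 0)) (hgd0 : Tendsto gd atTop (nhds 0))
    (hint1 : IntegrableOn (fun x => fdd x * (starRingEnd ℂ) (g x)) (Ioi a))
    (hint2 : IntegrableOn (fun x => f x * (starRingEnd ℂ) (gdd x)) (Ioi a)) :
    (∫ x in Ioi a, ((-(fdd x)) * (starRingEnd ℂ) (g x) - f x * (starRingEnd ℂ) (-(gdd x))))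
      = -(f a * (starRingEnd ℂ) (gd a) - fd a * (starRingEnd ℂ) (g a)) := by
  have hW := fun x hx => wronskian_hasDerivWithinAt (hf x hx) (hfd x hx) (hg x hx) (hgd x hx)
  have hlim : Tendsto (fun y => f y * (starRingEnd ℂ) (gd y) - fd y * (starRingEnd ℂ) (g y))
      atTop (nhds 0) := by
    simpa using (hf0.mul hgd0.star).sub (hfd0.mul hg0.star)
  have hint : IntegrableOn
      (fun x => (-(fdd x)) * (starRingEnd ℂ) (g x) - f x * (starRingEnd ℂ) (-(gdd x))) (Ioi a) := by
    refine (hint1.neg.add hint2).congr_fun (fun x _ => ?_) measurableSet_Ioi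
    simp
  rw [integral_Ioi_of_hasDerivAt_of_tendsto (hW a self_mem_Ici).continuousWithinAt
    (fun x hx => (hW x (Ioi_subset_Ici_self hx)).hasDerivAt (Ici_mem_nhds hx)) hint hlim, zero_sub]

lemma Pplus_mulVec_zero (N : ℕ) (x : Fin (N + 1) × Fin 2 → ℂ) (i : Fin (N + 1)) :
    (Pplus N).mulVec x (i, 0) = x (i, 1) := by
  simp [Matrix.mulVec, dotProduct, Pplus, Fintype.sum_prod_type]

lemma Pplus_mulVec_one (N : ℕ) (x : Fin (N + 1) × Fin 2 → ℂ) (i : Fin (N + 1)) :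
    (Pplus N).mulVec x (i, 1) = -x (i, 0) := by
  simp [Matrix.mulVec, dotProduct, Pplus, Fintype.sum_prod_type]

lemma herm_Pplus (N : ℕ) (x y : Fin (N + 1) × Fin 2 → ℂ) :
    herm ((Pplus N).mulVec x) y
      = ∑ i, -(x (i, 0) * (starRingEnd ℂ) (y (i, 1)) - x (i, 1) * (starRingEnd ℂ) (y (i, 0))) := by
  simp only [herm, Fintype.sum_prod_type, Fin.sum_univ_two, Pplus_mulVec_zero, Pplus_mulVec_one]
  exact Finset.sum_congr rfl fun i _ => by ring

lemma herm_Pminus (N : ℕ) (x y : Fin (N + 1) × Fin 2 → ℂ) :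
    herm ((Pminus N).mulVec x) y = ((N : ℂ) + 1)⁻¹ * herm ((Pplus N).mulVec x) y := by
  simp only [herm, Pminus, Matrix.smul_mulVec, Pi.smul_apply, smul_eq_mul, Finset.mul_sum, mul_assoc]

/-- The Green-type identity for the free Laplacian on a looping-edge
graph (loop `[−L,L]`, `N` half-lines `[L,∞)`):
`[−ΔU, V] − [U, −ΔV] = ⟨P₊ u, ũ⟩ − ⟨P₋ v, ṽ⟩`. -/
theorem green_identity_looping_edge (L : ℝ) (hL : 0 < L) (N : ℕ) (hN : 1 ≤ N)
    (φ φd φdd φt φtd φtdd : ℝ → ℂ)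
    (ψ ψd ψdd ψt ψtd ψtdd : Fin N → ℝ → ℂ)
    -- φ, φ̃ twice continuously differentiable on [−L, L]
    (hφ : ∀ x ∈ Icc (-L) L, HasDerivWithinAt φ (φd x) (Icc (-L) L) x)
    (hφd : ∀ x ∈ Icc (-L) L, HasDerivWithinAt φd (φdd x) (Icc (-L) L) x)
    (hφdd : ContinuousOn φdd (Icc (-L) L))
    (hφt : ∀ x ∈ Icc (-L) L, HasDerivWithinAt φt (φtd x) (Icc (-L) L) x)
    (hφtd : ∀ x ∈ Icc (-L) L, HasDerivWithinAt φtd (φtdd x) (Icc (-L) L) x)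
    (hφtdd : ContinuousOn φtdd (Icc (-L) L))
    -- ψⱼ, ψ̃ⱼ twice continuously differentiable on [L, ∞)
    (hψ : ∀ j, ∀ x ∈ Ici L, HasDerivWithinAt (ψ j) (ψd j x) (Ici L) x)
    (hψd : ∀ j, ∀ x ∈ Ici L, HasDerivWithinAt (ψd j) (ψdd j x) (Ici L) x)
    (hψdd : ∀ j, ContinuousOn (ψdd j) (Ici L))
    (hψt : ∀ j, ∀ x ∈ Ici L, HasDerivWithinAt (ψt j) (ψtd j x) (Ici L) x)
    (hψtd : ∀ j, ∀ x ∈ Ici L, HasDerivWithinAt (ψtd j) (ψtdd j x) (Ici L) x)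
    (hψtdd : ∀ j, ContinuousOn (ψtdd j) (Ici L))
    -- decay at infinity
    (hdec1 : ∀ j, Tendsto (ψ j) atTop (nhds 0))
    (hdec2 : ∀ j, Tendsto (ψd j) atTop (nhds 0))
    (hdec3 : ∀ j, Tendsto (ψt j) atTop (nhds 0))
    (hdec4 : ∀ j, Tendsto (ψtd j) atTop (nhds 0))
    -- integrability on (L, ∞)
    (hint1 : ∀ j, IntegrableOn (fun x => ψdd j x * (starRingEnd ℂ) (ψt j x)) (Ioi L))
    (hint2 : ∀ j, IntegrableOn (fun x => ψ j x * (starRingEnd ℂ) (ψtdd j x)) (Ioi L)) :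
    (∫ x in (-L)..L,
        ((-φdd x) * (starRingEnd ℂ) (φt x) - φ x * (starRingEnd ℂ) (-(φtdd x))))
      + ∑ j : Fin N, ∫ x in Ioi L,
          ((-(ψdd j x)) * (starRingEnd ℂ) (ψt j x)
            - ψ j x * (starRingEnd ℂ) (-(ψtdd j x)))
      = herm ((Pplus N).mulVec (bdryU L φ φd ψ ψd)) (bdryU L φt φtd ψt ψtd)
        - herm ((Pminus N).mulVec (bdryV L φ φd)) (bdryV L φt φtd) := by
  have hN0 : (N : ℂ) + 1 ≠ 0 := Nat.cast_add_one_ne_zero N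
  have hV : herm ((Pminus N).mulVec (bdryV L φ φd)) (bdryV L φt φtd)
      = -(φ L * (starRingEnd ℂ) (φtd L) - φd L * (starRingEnd ℂ) (φt L)) := by
    rw [herm_Pminus, herm_Pplus]
    simp only [bdryV, one_ne_zero, if_true, if_false, Finset.sum_const, Finset.card_univ,
      Fintype.card_fin, nsmul_eq_mul, Nat.cast_add, Nat.cast_one]
    rw [inv_mul_cancel_left₀ hN0]
  have hU : herm ((Pplus N).mulVec (bdryU L φ φd ψ ψd)) (bdryU L φt φtd ψt ψtd)
      = -(φ (-L) * (starRingEnd ℂ) (φtd (-L)) - φd (-L) * (starRingEnd ℂ) (φt (-L)))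
        + ∑ j, -(ψ j L * (starRingEnd ℂ) (ψtd j L) - ψd j L * (starRingEnd ℂ) (ψt j L)) := by
    rw [herm_Pplus, Fin.sum_univ_succ]
    simp [bdryU]
  rw [hU, hV, integral_loop (by linarith) hφ hφd hφdd hφt hφtd hφtdd,
    Finset.sum_congr rfl fun j _ => integral_halfLine (hψ j) (hψd j) (hψt j) (hψtd j)
      (hdec1 j) (hdec2 j) (hdec3 j) (hdec4 j) (hint1 j) (hint2 j)]
  ring
end

section
/- Let N ≥ 1 and let m_{ij} ∈ ℝ be given for i,j ∈ {1,…,N+1}, with m_{ij} = m_{ji} whenever i,j ∈ {2,…,N+1}. Define the real 2(N+1)×2(N+1) matrix 𝓛'_N as the (N+1)×(N+1) block matrix with 2×2 blocks: A₁₁ has rows (1, 0) and (m₁₁, N+1); for j ∈ {2,…,N+1}, A_{1j} has rows (0, 0) and (0, m_{1j}), and A_{j1} has rows (−m_{1j}, 0) and (0, 0); for i = j with i ≥ 2, A_{ii} has rows (N+1, m_{ii}) and (0, 1); and for i ≠ j with i,j ≥ 2, A_{ij} has rows (0, m_{ij}) and (0, 0). Then 𝓛'_N is invertible and satisfies (𝓛'_N)^T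 P₋ 𝓛'_N = P₊ (equivalently, ⟨P₋ 𝓛'_N x, 𝓛'_N y⟩ = ⟨P₊ x, y⟩ for all x, y ∈ ℂ^(2(N+1))). -/
/-!
Write `e_{i,a}` for the coordinate forms. The rows of `𝓛'_N` pair up so that the alternating form
`∑ i, row (i,0) ∧ row (i,1)`, which is the form with matrix `(𝓛'_N)ᵀ P₊ 𝓛'_N`, collapses to
`(N+1) ∑ i, e_{i,0} ∧ e_{i,1}`: the two families of `m_{1j} e_{1,0} ∧ e_{j,1}` terms, coming from
the first block row and the first block column, cancel, and the terms `m_{ij} e_{j,1} ∧ e_{i,1}`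
with `i, j ≥ 2` cancel by symmetry. Dividing by `N+1` gives `(𝓛'_N)ᵀ P₋ 𝓛'_N = P₊`.
Invertibility follows because `P₊ ^ 2 = -1`, so `-P₊ (𝓛'_N)ᵀ P₋` is a left inverse; the sesquilinear
identity follows because the entries of `𝓛'_N` are real.
-/

open scoped BigOperators
open Matrix

/-- The block matrix `𝓛'_N`: `A₁₁ = [[1,0],[m₁₁,N+1]]`; for `j ≥ 2`,
`A_{1j} = [[0,0],[0,m_{1j}]]` and `A_{j1} = [[−m_{1j},0],[0,0]]`; for `i ≥ 2`,
`A_{ii} = [[N+1,m_{ii}],[0,1]]`; for `i ≠ j`, `i,j ≥ 2`, `A_{ij} = [[0,m_{ij}],[0,0]]`.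
Block index `0 : Fin (N+1)` plays the role of the paper's index `1`. -/
noncomputable def LN'mat (N : ℕ) (m : Fin (N + 1) → Fin (N + 1) → ℝ) :
    Matrix (Fin (N + 1) × Fin 2) (Fin (N + 1) × Fin 2) ℂ :=
  fun p q =>
    if p.1 = 0 then
      (if q.1 = 0 then
        (if p.2 = 0 ∧ q.2 = 0 then 1
         else if p.2 = 1 ∧ q.2 = 0 then (m 0 0 : ℂ)
         else if p.2 = 1 ∧ q.2 = 1 then ((N : ℂ) + 1) else 0)
       else
        (if p.2 = 1 ∧ q.2 = 1 then (m 0 q.1 : ℂ) else 0))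
    else
      (if q.1 = 0 then
        (if p.2 = 0 ∧ q.2 = 0 then -(m 0 p.1 : ℂ) else 0)
       else if p.1 = q.1 then
        (if p.2 = 0 ∧ q.2 = 0 then ((N : ℂ) + 1)
         else if p.2 = 0 ∧ q.2 = 1 then (m p.1 q.1 : ℂ)
         else if p.2 = 1 ∧ q.2 = 1 then 1 else 0)
       else
        (if p.2 = 0 ∧ q.2 = 1 then (m p.1 q.1 : ℂ) else 0))

/-- `Aᵀ P₊ B` is the sum over blocks of `2 × 2` minors built from the two rows of each block. -/
lemma transpose_mul_Pplus_mul_apply (N : ℕ)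
    (A B : Matrix (Fin (N + 1) × Fin 2) (Fin (N + 1) × Fin 2) ℂ) (p q : Fin (N + 1) × Fin 2) :
    (Aᵀ * Pplus N * B) p q = ∑ i, (A (i, 0) p * B (i, 1) q - A (i, 1) p * B (i, 0) q) := by
  rw [Matrix.mul_assoc]
  simp only [Matrix.mul_apply, Matrix.transpose_apply, Fintype.sum_prod_type, Fin.sum_univ_two]
  refine Finset.sum_congr rfl fun i _ => ?_
  simp [Pplus, sub_eq_add_neg]

lemma Pplus_mul_self (N : ℕ) : Pplus N * Pplus N = -1 := by
  ext ⟨i, a⟩ ⟨j, b⟩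
  fin_cases a <;> fin_cases b <;>
    simp [Pplus, Matrix.mul_apply, Fintype.sum_prod_type, Matrix.one_apply, neg_ite]

lemma LN'mat_transpose_mul_Pplus_mul (N : ℕ) (m : Fin (N + 1) → Fin (N + 1) → ℝ)
    (hm : ∀ i j : Fin (N + 1), i ≠ 0 → j ≠ 0 → m i j = m j i) :
    (LN'mat N m)ᵀ * Pplus N * LN'mat N m = ((N : ℂ) + 1) • Pplus N := by
  ext ⟨j, b⟩ ⟨k, c⟩
  rw [transpose_mul_Pplus_mul_apply, Fin.sum_univ_succ]
  have hs : ∀ i j : Fin N, m i.succ j.succ = m j.succ i.succ := fun i j =>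
    hm _ _ (Fin.succ_ne_zero i) (Fin.succ_ne_zero j)
  -- The block index `0` is special in `LN'mat`, so each index is split into `0` and successors.
  refine Fin.cases ?_ (fun j => ?_) j <;> refine Fin.cases ?_ (fun k => ?_) k <;>
    fin_cases b <;> fin_cases c <;>
    simp [LN'mat, Pplus, Fin.succ_ne_zero, (Fin.succ_ne_zero _).symm]
  · simp only [eq_comm]
  · rcases eq_or_ne j k with rfl | hjk
    · simp
    · simp [hjk, hjk.symm]
  · rw [hs, sub_self]

lemma LN'mat_transpose_mul_Pminus_mul (N : ℕ) (m : Fin (N + 1) → Fin (N + 1) → ℝ)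
    (hm : ∀ i j : Fin (N + 1), i ≠ 0 → j ≠ 0 → m i j = m j i) :
    (LN'mat N m)ᵀ * Pminus N * LN'mat N m = Pplus N := by
  have hN : (N : ℂ) + 1 ≠ 0 := by exact_mod_cast N.succ_ne_zero
  rw [Pminus, Matrix.mul_smul, Matrix.smul_mul, LN'mat_transpose_mul_Pplus_mul N m hm, smul_smul,
    inv_mul_cancel₀ hN, one_smul]

/-- Complex conjugation commutes with `𝓛'_N`, whose entries are real. -/
lemma star_LN'mat_mulVec (N : ℕ) (m : Fin (N + 1) → Fin (N + 1) → ℝ)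
    (y : Fin (N + 1) × Fin 2 → ℂ) : star (LN'mat N m *ᵥ y) = LN'mat N m *ᵥ star y := by
  have hreal : ∀ p q, star (LN'mat N m p q) = LN'mat N m p q := by
    intro p q
    unfold LN'mat
    split_ifs <;> simp
  ext p
  simp only [Pi.star_apply, Matrix.mulVec, dotProduct, star_sum, star_mul', hreal]

lemma herm_eq_dotProduct_star {ι : Type*} [Fintype ι] (x y : ι → ℂ) :
    herm x y = x ⬝ᵥ star y := rfl

/-- For real parameters `m_{ij}` which are symmetric in the indices
`i, j ∈ {2, …, N+1}`, the matrix `𝓛'_N` is invertible and satisfies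
`(𝓛'_N)ᵀ P₋ 𝓛'_N = P₊`, equivalently `⟨P₋ 𝓛'_N x, 𝓛'_N y⟩ = ⟨P₊ x, y⟩` for all
`x, y ∈ ℂ^(2(N+1))`. -/
theorem LN'_is_unitary (N : ℕ) (hN : 1 ≤ N) (m : Fin (N + 1) → Fin (N + 1) → ℝ)
    (hm : ∀ i j : Fin (N + 1), i ≠ 0 → j ≠ 0 → m i j = m j i) :
    IsUnit (LN'mat N m) ∧
    (LN'mat N m)ᵀ * Pminus N * LN'mat N m = Pplus N ∧
    ∀ x y : Fin (N + 1) × Fin 2 → ℂ,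
      herm ((Pminus N).mulVec ((LN'mat N m).mulVec x)) ((LN'mat N m).mulVec y)
        = herm ((Pplus N).mulVec x) y := by
  have key := LN'mat_transpose_mul_Pminus_mul N m hm
  refine ⟨?_, key, fun x y => ?_⟩
  · refine (Matrix.isUnit_iff_isUnit_det _).mpr (Matrix.isUnit_det_of_left_inverse
      (B := -(Pplus N * ((LN'mat N m)ᵀ * Pminus N))) ?_)
    rw [Matrix.neg_mul, Matrix.mul_assoc, key, Pplus_mul_self, neg_neg]
  · rw [herm_eq_dotProduct_star, herm_eq_dotProduct_star, star_LN'mat_mulVec, ← key,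
      dotProduct_mulVec, ← mulVec_transpose, mulVec_mulVec, mulVec_mulVec]
end

section
/- Let L > 0, let N be a positive integer, let Z < 0, and let ω > N²/Z². Define Ψ(x) = √(2ω)·sech(√ω·(x−L) + arctanh(−N/(Z·√ω))) for x ≥ L, where sech t = 1/cosh t. If N·Ψ'(L) = Z·Ψ''(L), then ω·Z² = N². In particular, since ω > N²/Z², the equality N·Ψ'(L) = Z·Ψ''(L) is impossible. -/
/-!
Write `s = √ω`, `y = -N/(Z s)` and `a = arctanh y`. By `N²/Z² < ω`, `y` lies in `(-1, 1)`, so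
`tanh a = y`, i.e. `Z s sinh a = -N cosh a`. Differentiating the sech profile twice at `L` gives
`Ψ'(L) = -√(2ω) s sinh a / cosh² a` and `Ψ''(L) = √(2ω) s² (2 sinh² a - cosh² a) / cosh³ a`.
Substituting these into `N Ψ'(L) = Z Ψ''(L)` and eliminating `sinh a` leaves `N² = 2N² - ω Z²`,
that is `ω Z² = N²`, contrary to the strict inequality.
-/

open Set MeasureTheory

/-- The inverse hyperbolic tangent, `arctanh y = (1/2)·log((1+y)/(1−y))`. -/
noncomputable def arctanh (y : ℝ) : ℝ := (1 / 2) * Real.log ((1 + y) / (1 - y))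

/-- The tail-soliton profile
`Ψ(x) = √(2ω)·sech(√ω·(x−L) + arctanh(−N/(Z·√ω)))`, where `sech t = 1/cosh t`. -/
noncomputable def tailProfile (L ω Z : ℝ) (N : ℕ) : ℝ → ℝ := fun x =>
  Real.sqrt (2 * ω) *
    (1 / Real.cosh (Real.sqrt ω * (x - L) + arctanh (-(N : ℝ) / (Z * Real.sqrt ω))))

theorem sinh_arctanh_eq {y : ℝ} (h1 : -1 < y) (h2 : y < 1) :
    Real.sinh (arctanh y) = y * Real.cosh (arctanh y) := by
  have h : arctanh y = Real.artanh y := (Real.artanh_eq_half_log ⟨h1.le, h2.le⟩).symm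
  have ht := Real.tanh_artanh (x := y) ⟨h1, h2⟩
  rw [Real.tanh_eq_sinh_div_cosh, div_eq_iff (Real.cosh_pos _).ne'] at ht
  rw [h, ht]

theorem hasDerivAt_sech_profile (A s L a x : ℝ) :
    HasDerivAt (fun x => A * (1 / Real.cosh (s * (x - L) + a)))
      (-(A * s) * (Real.sinh (s * (x - L) + a) / Real.cosh (s * (x - L) + a) ^ 2)) x := by
  have hlin : HasDerivAt (fun x => s * (x - L) + a) s x := by
    simpa using (((hasDerivAt_id x).sub_const L).const_mul s).add_const a
  have hc := (Real.cosh_pos (s * (x - L) + a)).ne'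
  refine (((hasDerivAt_const x (1 : ℝ)).div hlin.cosh hc).const_mul A).congr_deriv ?_
  ring

theorem hasDerivAt_deriv_sech_profile (A s L a x : ℝ) :
    HasDerivAt (fun x => -(A * s) *
        (Real.sinh (s * (x - L) + a) / Real.cosh (s * (x - L) + a) ^ 2))
      (A * s ^ 2 * ((2 * Real.sinh (s * (x - L) + a) ^ 2 - Real.cosh (s * (x - L) + a) ^ 2) /
        Real.cosh (s * (x - L) + a) ^ 3)) x := by
  have hlin : HasDerivAt (fun x => s * (x - L) + a) s x := by
    simpa using (((hasDerivAt_id x).sub_const L).const_mul s).add_const a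
  have hc := (Real.cosh_pos (s * (x - L) + a)).ne'
  refine ((hlin.sinh.div (hlin.cosh.pow 2) (pow_ne_zero 2 hc)).const_mul
    (-(A * s))).congr_deriv ?_
  simp only [Pi.pow_apply]
  field_simp
  push_cast
  ring

/-- For `L > 0`, `N ≥ 1`, `Z < 0` and `ω > N²/Z²`: if
`N·Ψ'(L) = Z·Ψ''(L)` then `ω·Z² = N²`; in particular, since `ω > N²/Z²`, the equality
`N·Ψ'(L) = Z·Ψ''(L)` is impossible. -/
theorem tailProfile_derivative_vertex_condition_impossible
    (L : ℝ) (hL : 0 < L) (N : ℕ) (hN : 1 ≤ N)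
    (Z : ℝ) (hZ : Z < 0) (ω : ℝ) (hω : (N : ℝ) ^ 2 / Z ^ 2 < ω) :
    (((N : ℝ) * deriv (tailProfile L ω Z N) L
        = Z * deriv (deriv (tailProfile L ω Z N)) L) → ω * Z ^ 2 = (N : ℝ) ^ 2) ∧
    (N : ℝ) * deriv (tailProfile L ω Z N) L
      ≠ Z * deriv (deriv (tailProfile L ω Z N)) L := by
  have hZ2 : 0 < Z ^ 2 := sq_pos_iff.2 hZ.ne
  have hlt : (N : ℝ) ^ 2 < ω * Z ^ 2 := (div_lt_iff₀ hZ2).1 hω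
  have hω0 : 0 < ω := lt_of_le_of_lt (by positivity) hω
  have key : (N : ℝ) * deriv (tailProfile L ω Z N) L
      = Z * deriv (deriv (tailProfile L ω Z N)) L → ω * Z ^ 2 = (N : ℝ) ^ 2 := by
    intro h
    have hs : 0 < Real.sqrt ω := Real.sqrt_pos.2 hω0
    have hA : 0 < Real.sqrt (2 * ω) := Real.sqrt_pos.2 (by positivity)
    have hsq : Real.sqrt ω ^ 2 = ω := Real.sq_sqrt hω0.le
    have hd1 : deriv (tailProfile L ω Z N) = _ := funext fun x =>
      (hasDerivAt_sech_profile (Real.sqrt (2 * ω)) (Real.sqrt ω) L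
        (arctanh (-(N : ℝ) / (Z * Real.sqrt ω))) x).deriv
    rw [hd1, (hasDerivAt_deriv_sech_profile _ _ _ _ _).deriv] at h
    simp only [sub_self, mul_zero, zero_add] at h
    have hZs : Z * Real.sqrt ω ≠ 0 := mul_ne_zero hZ.ne hs.ne'
    have hy : (-(N : ℝ) / (Z * Real.sqrt ω)) ^ 2 < 1 := by
      rw [div_pow, div_lt_one (sq_pos_iff.2 hZs), mul_pow, hsq]
      linarith
    obtain ⟨hy1, hy2⟩ := abs_lt.1 ((sq_lt_one_iff_abs_lt_one _).1 hy)
    have hS := sinh_arctanh_eq hy1 hy2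
    have hC := Real.cosh_pos (arctanh (-(N : ℝ) / (Z * Real.sqrt ω)))
    generalize Real.sinh (arctanh (-(N : ℝ) / (Z * Real.sqrt ω))) = S at h hS
    generalize Real.cosh (arctanh (-(N : ℝ) / (Z * Real.sqrt ω))) = C at h hS hC
    generalize Real.sqrt (2 * ω) = A at h hA
    generalize Real.sqrt ω = s at h hS hs hsq hZs
    have hS' : Z * s * S = -N * C := by
      rw [hS, ← mul_assoc, mul_div_cancel₀ _ hZs]
    have h' : -(N * S * C) = Z * s * (2 * S ^ 2 - C ^ 2) := by
      have hne : A * s ≠ 0 := (mul_pos hA hs).ne'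
      have e : A * s * -(N * S * C) = A * s * (Z * s * (2 * S ^ 2 - C ^ 2)) := by
        have h3 := congrArg (fun t => t * C ^ 3) h
        have hl : N * (-(A * s) * (S / C ^ 2)) * C ^ 3 = A * s * -(N * S * C) := by
          field_simp
        have hr : Z * (A * s ^ 2 * ((2 * S ^ 2 - C ^ 2) / C ^ 3)) * C ^ 3
            = A * s * (Z * s * (2 * S ^ 2 - C ^ 2)) := by
          field_simp
        exact hl.symm.trans (h3.trans hr)
      exact mul_left_cancel₀ hne e
    have hfin : C ^ 2 * (ω * Z ^ 2) = C ^ 2 * (N : ℝ) ^ 2 := by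
      -- Multiply the vertex condition by `Z s` and replace each `Z s S` by `-N C`.
      rw [← hsq]
      linear_combination (Z * s) * h' + (2 * (Z * s * S) - N * C) * hS'
    exact mul_left_cancel₀ (pow_pos hC 2).ne' hfin
  exact ⟨key, fun h => hlt.ne' (key h)⟩
end

section
/- Let L > 0, let N be a positive integer, let Z < 0, and let ω > N²/Z². Define Ψ(x) = √(2ω)·sech(√ω·(x−L) + arctanh(−N/(Z·√ω))) for x ≥ L, where sech t = 1/cosh t. Then N·∫_{L}^{∞} [ (Ψ''(x))² + ω·(Ψ'(x))² − 3·Ψ(x)²·(Ψ'(x))² ] dx = 2·(N²/Z)·ω²·(1 − N²/(Z²·ω))·(1 − 2N²/(Z²·ω)). In particular, if ω > 2N²/Z² then this quantity is strictly negative. -/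
/-!
The profile solves `Ψ'' = ωΨ - Ψ³`, hence `Ψ''' = (ω - 3Ψ²)Ψ'`, and the integrand is exactly
`(Ψ' Ψ'')'`. Since `Ψ' Ψ''` vanishes at infinity, the integral equals `-Ψ'(L) Ψ''(L)`.

Everything is expressed through `T = tanh (√ω (x - L) + a)` with `a = arctanh (-N / (Z√ω))`:
`Ψ' = -√ω T Ψ` (`hasDerivAt_tailProfile`), `Ψ² = 2ω(1 - T²)` (`tailProfile_sq`) and
`T' = √ω (1 - T²)`, so the integrand is a polynomial in `T`, integrated in
`integral_tanh_polynomial`. The condition `ω > N²/Z²` says precisely that `N / |Z√ω| < 1`, so that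
`T = -N / (Z√ω)` at `x = L`.
-/

open Set MeasureTheory

/-- Differentiation rule for `tanh` along the affine phase `c (x - L) + a`. -/
lemma hasDerivAt_tanh_phase (c L a x : ℝ) :
    HasDerivAt (fun x => Real.tanh (c * (x - L) + a))
      (c * (1 - Real.tanh (c * (x - L) + a) ^ 2)) x := by
  have hu : HasDerivAt (fun x => c * (x - L) + a) c x := by
    simpa using (((hasDerivAt_id x).sub_const L).const_mul c).add_const a
  have hc := (Real.cosh_pos (c * (x - L) + a)).ne'
  have h := hu.sinh.div hu.cosh hc
  have hfun : (fun x => Real.tanh (c * (x - L) + a)) =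
      (fun x => Real.sinh (c * (x - L) + a)) / (fun x => Real.cosh (c * (x - L) + a)) := by
    funext y
    simp [Real.tanh_eq_sinh_div_cosh]
  rw [hfun]
  refine h.congr_deriv ?_
  rw [Real.tanh_eq_sinh_div_cosh]
  field_simp

lemma tendsto_tanh_atTop_one : Filter.Tendsto Real.tanh Filter.atTop (nhds 1) := by
  have h0 : Filter.Tendsto (fun x : ℝ => Real.exp (-(x + x))) Filter.atTop (nhds 0) :=
    Real.tendsto_exp_neg_atTop_nhds_zero.comp
      (Filter.tendsto_id.atTop_add_atTop Filter.tendsto_id)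
  have h1 : Filter.Tendsto
      (fun x : ℝ => (1 - Real.exp (-(x + x))) / (1 + Real.exp (-(x + x))))
      Filter.atTop (nhds ((1 - 0) / (1 + 0))) :=
    (h0.const_sub 1).div (h0.const_add 1) (by norm_num)
  have h2 : Real.tanh = fun x : ℝ => (1 - Real.exp (-(x + x))) / (1 + Real.exp (-(x + x))) := by
    funext x
    have h3 : Real.exp (-x) = Real.exp x * Real.exp (-(x + x)) := by
      rw [← Real.exp_add]
      ring_nf
    rw [Real.tanh_eq, h3]
    have := Real.exp_pos x
    have := Real.exp_pos (-(x + x))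
    field_simp
  rw [h2]
  simpa using h1

lemma tendsto_tanh_phase {c : ℝ} (hc : 0 < c) (L a : ℝ) :
    Filter.Tendsto (fun x => Real.tanh (c * (x - L) + a)) Filter.atTop (nhds 1) := by
  refine tendsto_tanh_atTop_one.comp (Filter.tendsto_atTop_add_const_right _ a ?_)
  exact Filter.Tendsto.const_mul_atTop hc
    (Filter.tendsto_atTop_add_const_right _ (-L) Filter.tendsto_id)

lemma tanh_arctanh {y : ℝ} (h₁ : -1 < y) (h₂ : y < 1) : Real.tanh (arctanh y) = y := by
  have h : arctanh y = Real.artanh y := by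
    rw [arctanh, Real.artanh_eq_half_log ⟨h₁.le, h₂.le⟩]
  rw [h, Real.tanh_artanh ⟨h₁, h₂⟩]

/-- With `T = tanh (√ω (x - L) + a)`, the profile satisfies `Ψ' = -√ω T Ψ`. -/
lemma hasDerivAt_tailProfile (L ω Z : ℝ) (N : ℕ) (x : ℝ) :
    HasDerivAt (tailProfile L ω Z N)
      (-(Real.sqrt ω * Real.tanh (Real.sqrt ω * (x - L) + arctanh (-(N : ℝ) / (Z * Real.sqrt ω)))
        * tailProfile L ω Z N x)) x := by
  unfold tailProfile
  generalize arctanh (-(N : ℝ) / (Z * Real.sqrt ω)) = a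
  generalize Real.sqrt ω = c
  have hu : HasDerivAt (fun x => c * (x - L) + a) c x := by
    simpa using (((hasDerivAt_id x).sub_const L).const_mul c).add_const a
  have hc := (Real.cosh_pos (c * (x - L) + a)).ne'
  have h := (hu.cosh.inv hc).const_mul (Real.sqrt (2 * ω))
  simp only [one_div]
  refine h.congr_deriv ?_
  rw [Real.tanh_eq_sinh_div_cosh]
  field_simp

/-- `Ψ² = 2ω (1 - T²)`, i.e. `sech² = 1 - tanh²`. -/
lemma tailProfile_sq (L : ℝ) {ω : ℝ} (hω : 0 ≤ ω) (Z : ℝ) (N : ℕ) (x : ℝ) :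
    tailProfile L ω Z N x ^ 2 = 2 * ω *
      (1 - Real.tanh (Real.sqrt ω * (x - L) + arctanh (-(N : ℝ) / (Z * Real.sqrt ω))) ^ 2) := by
  unfold tailProfile
  generalize Real.sqrt ω * (x - L) + arctanh (-(N : ℝ) / (Z * Real.sqrt ω)) = u
  have hc := (Real.cosh_pos u).ne'
  rw [mul_pow, Real.sq_sqrt (by positivity), Real.tanh_eq_sinh_div_cosh]
  field_simp
  rw [Real.cosh_sq_sub_sinh_sq, mul_one]

/-- The integral is evaluated by noting that its integrand is the derivative of
`-2 c⁵ (2T³ - T)(1 - T²)`, which is `Ψ' Ψ''` written in terms of `T = tanh (c (x - L) + a)`;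
this primitive vanishes at infinity. -/
lemma integral_tanh_polynomial {c : ℝ} (hc : 0 < c) (L a : ℝ) :
    ∫ x in Ioi L, (c * (1 - Real.tanh (c * (x - L) + a) ^ 2)) *
        (2 * c ^ 5 * (10 * Real.tanh (c * (x - L) + a) ^ 4
          - 9 * Real.tanh (c * (x - L) + a) ^ 2 + 1))
      = 2 * c ^ 5 * (2 * Real.tanh a ^ 3 - Real.tanh a) * (1 - Real.tanh a ^ 2) := by
  have hd := hasDerivAt_tanh_phase c L a
  have hlim := tendsto_tanh_phase hc L a
  have hlt : ∀ x, Real.tanh (c * (x - L) + a) ^ 2 < 1 := fun x => Real.tanh_sq_lt_one _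
  have hL : Real.tanh (c * (L - L) + a) = Real.tanh a := by simp
  generalize hT : (fun x => Real.tanh (c * (x - L) + a)) = T at hd hlim
  have hTx : ∀ x, Real.tanh (c * (x - L) + a) = T x := fun x => by rw [← hT]
  simp only [hTx] at hd hlt hL ⊢
  have hcont : Continuous T := continuous_iff_continuousAt.2 fun x => (hd x).continuousAt
  -- `c (1 - T²)` is integrable as the nonnegative derivative of a convergent function.
  have hint : IntegrableOn (fun x => c * (1 - T x ^ 2)) (Ioi L) :=
    integrableOn_Ioi_deriv_of_nonneg' (fun x _ => hd x)
      (fun x _ => mul_nonneg hc.le (by linarith [hlt x])) hlim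
  have hint' : IntegrableOn (fun x => (c * (1 - T x ^ 2)) *
      (2 * c ^ 5 * (10 * T x ^ 4 - 9 * T x ^ 2 + 1))) (Ioi L) := by
    refine Integrable.mul_bdd (c := 2 * c ^ 5 * 20) hint
      (by fun_prop : Continuous _).aestronglyMeasurable (Filter.Eventually.of_forall fun x => ?_)
    have h0 := sq_nonneg (T x)
    have h1 := hlt x
    rw [Real.norm_eq_abs, abs_mul, abs_of_pos (by positivity : 0 < 2 * c ^ 5)]
    refine mul_le_mul_of_nonneg_left (abs_le.2 ⟨?_, ?_⟩) (by positivity) <;> nlinarith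
  have hF : ∀ x, HasDerivAt (fun x => -(2 * c ^ 5 * (2 * T x ^ 3 - T x) * (1 - T x ^ 2)))
      ((c * (1 - T x ^ 2)) * (2 * c ^ 5 * (10 * T x ^ 4 - 9 * T x ^ 2 + 1))) x := by
    intro x
    have h := ((((((hd x).pow 3).const_mul 2).sub (hd x)).const_mul (2 * c ^ 5)).mul
      (((hd x).pow 2).const_sub 1)).neg
    refine h.congr_deriv ?_
    simp
    ring
  have hFlim : Filter.Tendsto (fun x => -(2 * c ^ 5 * (2 * T x ^ 3 - T x) * (1 - T x ^ 2)))
      Filter.atTop (nhds 0) := by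
    have h := ((((((hlim.pow 3).const_mul 2).sub hlim).const_mul (2 * c ^ 5)).mul
      ((hlim.pow 2).const_sub 1))).neg
    simpa using h
  rw [integral_Ioi_of_hasDerivAt_of_tendsto' (fun x _ => hF x) hint' hFlim, hL]
  ring

/-- For `L > 0`, `N ≥ 1`, `Z < 0` and `ω > N²/Z²`, the quadratic-form
value
`N·∫_L^∞ [(Ψ'')² + ω(Ψ')² − 3Ψ²(Ψ')²] dx = 2(N²/Z)ω²(1 − N²/(Z²ω))(1 − 2N²/(Z²ω))`;
in particular this quantity is strictly negative when `ω > 2N²/Z²`. -/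
theorem tailProfile_quadratic_form_value
    (L : ℝ) (hL : 0 < L) (N : ℕ) (hN : 1 ≤ N)
    (Z : ℝ) (hZ : Z < 0) (ω : ℝ) (hω : (N : ℝ) ^ 2 / Z ^ 2 < ω) :
    (N : ℝ) * ∫ x in Ioi L,
        ((deriv (deriv (tailProfile L ω Z N)) x) ^ 2
          + ω * (deriv (tailProfile L ω Z N) x) ^ 2
          - 3 * (tailProfile L ω Z N x) ^ 2 * (deriv (tailProfile L ω Z N) x) ^ 2)
      = 2 * ((N : ℝ) ^ 2 / Z) * ω ^ 2 * (1 - (N : ℝ) ^ 2 / (Z ^ 2 * ω))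
          * (1 - 2 * (N : ℝ) ^ 2 / (Z ^ 2 * ω)) ∧
    (2 * (N : ℝ) ^ 2 / Z ^ 2 < ω →
      (N : ℝ) * ∫ x in Ioi L,
        ((deriv (deriv (tailProfile L ω Z N)) x) ^ 2
          + ω * (deriv (tailProfile L ω Z N) x) ^ 2
          - 3 * (tailProfile L ω Z N x) ^ 2 * (deriv (tailProfile L ω Z N) x) ^ 2)
        < 0) := by
  have hN' : (0 : ℝ) < N := by exact_mod_cast hN
  have hω0 : 0 < ω := lt_of_le_of_lt (by positivity) hω
  have hZ2 : 0 < Z ^ 2 := sq_pos_of_neg hZ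
  have hc : 0 < Real.sqrt ω := Real.sqrt_pos.2 hω0
  have hcc : Real.sqrt ω ^ 2 = ω := Real.sq_sqrt hω0.le
  have hd := hasDerivAt_tailProfile L ω Z N
  have hsq := tailProfile_sq L hω0.le Z N
  have hty : Real.tanh (arctanh (-(N : ℝ) / (Z * Real.sqrt ω)))
      = -(N : ℝ) / (Z * Real.sqrt ω) := by
    have hlt : (-(N : ℝ) / (Z * Real.sqrt ω)) ^ 2 < 1 := by
      rw [div_pow, mul_pow, hcc, neg_sq, div_lt_one (by positivity)]
      rwa [div_lt_iff₀ hZ2, mul_comm] at hω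
    have habs := abs_lt.1 ((sq_lt_one_iff_abs_lt_one _).1 hlt)
    exact tanh_arctanh habs.1 habs.2
  have hval : (N : ℝ) * ∫ x in Ioi L,
        ((deriv (deriv (tailProfile L ω Z N)) x) ^ 2
          + ω * (deriv (tailProfile L ω Z N) x) ^ 2
          - 3 * (tailProfile L ω Z N x) ^ 2 * (deriv (tailProfile L ω Z N) x) ^ 2)
      = 2 * ((N : ℝ) ^ 2 / Z) * ω ^ 2 * (1 - (N : ℝ) ^ 2 / (Z ^ 2 * ω))
          * (1 - 2 * (N : ℝ) ^ 2 / (Z ^ 2 * ω)) := by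
    have hint := integral_tanh_polynomial hc L (arctanh (-(N : ℝ) / (Z * Real.sqrt ω)))
    rw [hty] at hint
    have hdT := hasDerivAt_tanh_phase (Real.sqrt ω) L (arctanh (-(N : ℝ) / (Z * Real.sqrt ω)))
    have hd1 : deriv (tailProfile L ω Z N) = fun x => -(Real.sqrt ω *
        Real.tanh (Real.sqrt ω * (x - L) + arctanh (-(N : ℝ) / (Z * Real.sqrt ω)))
          * tailProfile L ω Z N x) := funext fun x => (hd x).deriv
    have hd2 : ∀ x, deriv (deriv (tailProfile L ω Z N)) x = ω * (2 *
        Real.tanh (Real.sqrt ω * (x - L) + arctanh (-(N : ℝ) / (Z * Real.sqrt ω))) ^ 2 - 1)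
          * tailProfile L ω Z N x := by
      intro x
      have h := (((hdT x).const_mul (Real.sqrt ω)).mul (hd x)).neg
      rw [hd1]
      refine h.deriv.trans ?_
      linear_combination (2 * Real.tanh (Real.sqrt ω * (x - L)
        + arctanh (-(N : ℝ) / (Z * Real.sqrt ω))) ^ 2 - 1) * tailProfile L ω Z N x * hcc
    have hcongr : ∀ x, ((deriv (deriv (tailProfile L ω Z N)) x) ^ 2
          + ω * (deriv (tailProfile L ω Z N) x) ^ 2
          - 3 * (tailProfile L ω Z N x) ^ 2 * (deriv (tailProfile L ω Z N) x) ^ 2)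
        = (Real.sqrt ω * (1 - Real.tanh (Real.sqrt ω * (x - L)
            + arctanh (-(N : ℝ) / (Z * Real.sqrt ω))) ^ 2)) *
          (2 * Real.sqrt ω ^ 5 * (10 * Real.tanh (Real.sqrt ω * (x - L)
            + arctanh (-(N : ℝ) / (Z * Real.sqrt ω))) ^ 4
          - 9 * Real.tanh (Real.sqrt ω * (x - L)
            + arctanh (-(N : ℝ) / (Z * Real.sqrt ω))) ^ 2 + 1)) := by
      intro x
      have h6 : Real.sqrt ω * Real.sqrt ω ^ 5 = ω ^ 3 := by
        calc Real.sqrt ω * Real.sqrt ω ^ 5 = (Real.sqrt ω ^ 2) ^ 3 := by ring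
          _ = ω ^ 3 := by rw [hcc]
      rw [hd2, hd1]
      simp only [neg_sq, mul_pow, hsq, hcc]
      linear_combination (-2 * (1 - Real.tanh (Real.sqrt ω * (x - L)
            + arctanh (-(N : ℝ) / (Z * Real.sqrt ω))) ^ 2) *
          (10 * Real.tanh (Real.sqrt ω * (x - L)
            + arctanh (-(N : ℝ) / (Z * Real.sqrt ω))) ^ 4
          - 9 * Real.tanh (Real.sqrt ω * (x - L)
            + arctanh (-(N : ℝ) / (Z * Real.sqrt ω))) ^ 2 + 1)) * h6
    simp only [hcongr]
    rw [hint]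
    clear hint hdT hd1 hd2 hcongr hd hsq hty
    generalize Real.sqrt ω = c at hc hcc ⊢
    subst hcc
    have hZ' := hZ.ne
    field_simp
    ring
  refine ⟨hval, fun h2 => ?_⟩
  rw [hval]
  have hq1 : 0 < 1 - (N : ℝ) ^ 2 / (Z ^ 2 * ω) := by
    rw [sub_pos, div_lt_one (by positivity)]
    rwa [div_lt_iff₀ hZ2, mul_comm] at hω
  have hq2 : 0 < 1 - 2 * (N : ℝ) ^ 2 / (Z ^ 2 * ω) := by
    rw [sub_pos, div_lt_one (by positivity)]
    rwa [div_lt_iff₀ hZ2, mul_comm ω] at h2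
  have hneg : (N : ℝ) ^ 2 / Z < 0 := div_neg_of_pos_of_neg (by positivity) hZ
  refine mul_neg_of_neg_of_pos (mul_neg_of_neg_of_pos (mul_neg_of_neg_of_pos ?_ ?_) hq1) hq2
  · linarith
  · positivity
end
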